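/- (Monotone convergence of the soft policy iteration sequence.) Assume α > 0. Let π₀ be any policy and define inductively π_{k+1} s a = exp (Q^{π_k} s a / α) / ∑_{a'} exp (Q^{π_k} s a' / α). Then for every (s,a), the real sequence k ↦ Q^{π_k} s a is monotonically nondecreasing, and if |R s a| ≤ C for all (s,a) (with C ≥ 0), this sequence converges to a finite limit for every (s,a). -/

import Mathlib

/-!
For a fixed `q`, the entropy-regularised value `∑ a, p a * (q a - α * log (p a))` of a distribution `p`
is at most `α * log (∑ a, exp (q a / α))`, with equality at the softmax distribution
(`softValue_le_logSumExp`, `softValue_softmax`). Hence `Q^{π_k} = T^{π_k} Q^{π_k} ≤ T^{π_{k+1}} Q^{π_k}`,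
and `D = Q^{π_k} - Q^{π_{k+1}}` is bounded by `γ` times an average of `D`, which forces `D ≤ 0`.
For the upper bound, log-sum-exp is at most the maximum plus `α * log |A|`, so the maximum `M` of
`Q^{π_k}` satisfies `M ≤ C + γ * (M + α * log |A|)`, a bound independent of `k`. Both conclusions about a
maximum come from `le_div_of_discounted`. A bounded monotone real sequence converges.
-/

open Real Filter Topology

/-- The soft Bellman operator `T^π` of a policy `pol`, given transition kernel `P`,
reward `R`, discount `γ` and entropy temperature `α`. -/
noncomputable def softBellman {S A : Type*} [Fintype S] [Fintype A]
    (P : S → A → S → ℝ) (R : S → A → ℝ) (γ α : ℝ) (pol : S → A → ℝ)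
    (Q : S → A → ℝ) : S → A → ℝ :=
  fun s a => R s a +
    γ * ∑ s', P s a s' * (∑ a', pol s' a' * (Q s' a' - α * Real.log (pol s' a')))

/-- The Gibbs variational inequality at temperature `α`. -/
lemma softValue_le_logSumExp {A : Type*} [Fintype A] [Nonempty A] {α : ℝ} (hα : 0 < α)
    (p q : A → ℝ) (hp0 : ∀ a, 0 ≤ p a) (hp1 : ∑ a, p a = 1) :
    ∑ a, p a * (q a - α * Real.log (p a)) ≤ α * Real.log (∑ a, Real.exp (q a / α)) := by
  set Z := ∑ a, Real.exp (q a / α) with hZ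
  have hZpos : 0 < Z := Finset.sum_pos (fun a _ => Real.exp_pos _) Finset.univ_nonempty
  -- Where `p a > 0` this is `log x ≤ x - 1` at `x = exp (q a / α) / (Z * p a)`; the error terms sum to zero.
  have key : ∀ a, p a * (q a - α * Real.log (p a)) ≤
      p a * (α * Real.log Z) + α * (Real.exp (q a / α) / Z - p a) := by
    intro a
    rcases (hp0 a).eq_or_lt with h | h
    · rw [← h]
      simp only [zero_mul, zero_add, sub_zero]
      positivity
    · have h1 := Real.log_le_sub_one_of_pos
        (show 0 < Real.exp (q a / α) / (Z * p a) by positivity)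
      rw [Real.log_div (Real.exp_pos _).ne' (by positivity), Real.log_exp,
        Real.log_mul hZpos.ne' h.ne'] at h1
      have h2 := mul_le_mul_of_nonneg_left h1 (mul_pos hα h).le
      have e1 : α * p a * (q a / α - (Real.log Z + Real.log (p a))) =
          p a * (q a - α * Real.log (p a)) - p a * (α * Real.log Z) := by
        field_simp
        ring
      have e2 : α * p a * (Real.exp (q a / α) / (Z * p a) - 1) =
          α * (Real.exp (q a / α) / Z - p a) := by
        field_simp
      linarith
  calc _ ≤ ∑ a, (p a * (α * Real.log Z) + α * (Real.exp (q a / α) / Z - p a)) :=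
        Finset.sum_le_sum fun a _ => key a
    _ = α * Real.log Z := by
        rw [Finset.sum_add_distrib, ← Finset.sum_mul, ← Finset.mul_sum, Finset.sum_sub_distrib,
          ← Finset.sum_div, hp1, ← hZ, div_self hZpos.ne']
        ring

lemma softmax_sum {A : Type*} [Fintype A] [Nonempty A] (x : A → ℝ) :
    ∑ a, Real.exp (x a) / ∑ a', Real.exp (x a') = 1 := by
  rw [← Finset.sum_div, div_self]
  exact (Finset.sum_pos (fun a _ => Real.exp_pos _) Finset.univ_nonempty).ne'

/-- The softmax distribution attains equality in the Gibbs inequality. -/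
lemma softValue_softmax {A : Type*} [Fintype A] [Nonempty A] {α : ℝ} (hα : 0 < α)
    (p q : A → ℝ) (hp : ∀ a, p a = Real.exp (q a / α) / ∑ a', Real.exp (q a' / α)) :
    ∑ a, p a * (q a - α * Real.log (p a)) = α * Real.log (∑ a, Real.exp (q a / α)) := by
  have hZpos : 0 < ∑ a, Real.exp (q a / α) :=
    Finset.sum_pos (fun a _ => Real.exp_pos _) Finset.univ_nonempty
  have hp1 : ∑ a, p a = 1 := by
    simp_rw [hp]
    exact softmax_sum fun a => q a / α
  have hterm : ∀ a, q a - α * Real.log (p a) = α * Real.log (∑ a, Real.exp (q a / α)) := by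
    intro a
    rw [hp, Real.log_div (Real.exp_pos _).ne' hZpos.ne', Real.log_exp]
    field_simp
    ring
  simp_rw [hterm]
  rw [← Finset.sum_mul, hp1, one_mul]

lemma logSumExp_le {A : Type*} [Fintype A] [Nonempty A] {α : ℝ} (hα : 0 < α)
    (q : A → ℝ) (M : ℝ) (hM : ∀ a, q a ≤ M) :
    α * Real.log (∑ a, Real.exp (q a / α)) ≤ M + α * Real.log (Fintype.card A) := by
  have hZpos : 0 < ∑ a, Real.exp (q a / α) :=
    Finset.sum_pos (fun a _ => Real.exp_pos _) Finset.univ_nonempty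
  have hcard : (0 : ℝ) < Fintype.card A := by exact_mod_cast Fintype.card_pos
  have h1 : ∑ a, Real.exp (q a / α) ≤ Fintype.card A * Real.exp (M / α) := by
    calc _ ≤ ∑ _a : A, Real.exp (M / α) := by
          refine Finset.sum_le_sum fun a _ => Real.exp_le_exp.2 ?_
          exact div_le_div_of_nonneg_right (hM a) hα.le
      _ = _ := by simp
  have h2 := mul_le_mul_of_nonneg_left (Real.log_le_log hZpos h1) hα.le
  rw [Real.log_mul hcard.ne' (Real.exp_pos _).ne', Real.log_exp, mul_add,
    mul_div_cancel₀ M hα.ne'] at h2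
  linarith

lemma weighted_sum_le {ι : Type*} [Fintype ι] (w f : ι → ℝ) (hw0 : ∀ i, 0 ≤ w i)
    (hw1 : ∑ i, w i = 1) (M : ℝ) (hM : ∀ i, f i ≤ M) : ∑ i, w i * f i ≤ M := by
  calc _ ≤ ∑ i, w i * M :=
        Finset.sum_le_sum fun i _ => mul_le_mul_of_nonneg_left (hM i) (hw0 i)
    _ = M := by rw [← Finset.sum_mul, hw1, one_mul]

/-- If every upper bound `M` of `D` improves to `b + γ * M`, then `D` is at most the fixed point of
`M ↦ b + γ * M`: apply the hypothesis to the maximum of `D`. -/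
lemma le_div_of_discounted {S A : Type*} [Finite S] [Finite A] {γ : ℝ} (hγ1 : γ < 1)
    (D : S → A → ℝ) (b : ℝ)
    (h : ∀ M, (∀ s a, D s a ≤ M) → ∀ s a, D s a ≤ b + γ * M) (s : S) (a : A) :
    D s a ≤ b / (1 - γ) := by
  have : Nonempty (S × A) := ⟨(s, a)⟩
  obtain ⟨x, hx⟩ := Finite.exists_max fun x : S × A => D x.1 x.2
  have h1 := h (D x.1 x.2) (fun s a => hx (s, a)) x.1 x.2
  refine (hx (s, a)).trans ?_
  rw [le_div_iff₀ (by linarith)]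
  linarith

/-- Monotone convergence of the soft policy iteration sequence: with
`π_{k+1} s a = exp (Q^{π_k} s a / α) / ∑ exp (Q^{π_k} s a' / α)`, the sequence
`k ↦ Q^{π_k} s a` is nondecreasing for every `(s, a)`, and if the reward is bounded
by `C ≥ 0` it converges to a finite limit for every `(s, a)`. -/
theorem soft_policy_iteration_monotone_convergence
    {S A : Type*} [Fintype S] [Fintype A] [Nonempty S] [Nonempty A]
    (P : S → A → S → ℝ) (hP0 : ∀ s a s', 0 ≤ P s a s')
    (hP1 : ∀ s a, ∑ s', P s a s' = 1)
    (R : S → A → ℝ) (γ : ℝ) (hγ0 : 0 ≤ γ) (hγ1 : γ < 1) (α : ℝ) (hα : 0 < α)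
    (polseq : ℕ → S → A → ℝ)
    (hpol0 : ∀ s a, 0 ≤ polseq 0 s a) (hpol1 : ∀ s, ∑ a, polseq 0 s a = 1)
    (Qseq : ℕ → S → A → ℝ)
    (hfix : ∀ k, softBellman P R γ α (polseq k) (Qseq k) = Qseq k)
    (hrec : ∀ k s a, polseq (k + 1) s a =
        Real.exp (Qseq k s a / α) / ∑ a', Real.exp (Qseq k s a' / α)) :
    (∀ s a, Monotone fun k => Qseq k s a) ∧
    (∀ C : ℝ, 0 ≤ C → (∀ s a, |R s a| ≤ C) →
      ∀ s a, ∃ L : ℝ, Filter.Tendsto (fun k => Qseq k s a) Filter.atTop (nhds L)) := by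
  have hpol : ∀ k s, (∀ a, 0 ≤ polseq k s a) ∧ ∑ a, polseq k s a = 1 := by
    intro k s
    cases k with
    | zero => exact ⟨hpol0 s, hpol1 s⟩
    | succ k =>
      simp_rw [hrec]
      exact ⟨fun a => by positivity, softmax_sum fun a => Qseq k s a / α⟩
  have hQ : ∀ k s a, Qseq k s a = R s a + γ * ∑ s', P s a s' *
      ∑ a', polseq k s' a' * (Qseq k s' a' - α * Real.log (polseq k s' a')) := by
    intro k s a
    exact (congrFun (congrFun (hfix k) s) a).symm
  have hstep : ∀ k s a, Qseq k s a ≤ Qseq (k + 1) s a := by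
    intro k s a
    have := le_div_of_discounted hγ1 (fun s a => Qseq k s a - Qseq (k + 1) s a) 0 ?_ s a
    · simpa using this
    intro M hM s a
    have hval : ∀ s', ∑ a', polseq k s' a' * (Qseq k s' a' - α * Real.log (polseq k s' a')) -
        ∑ a', polseq (k + 1) s' a' *
          (Qseq (k + 1) s' a' - α * Real.log (polseq (k + 1) s' a')) ≤ M := by
      intro s'
      have h1 := softValue_le_logSumExp hα (polseq k s') (Qseq k s') (hpol k s').1 (hpol k s').2
      rw [← softValue_softmax hα (polseq (k + 1) s') (Qseq k s') (hrec k s')] at h1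
      have h2 := weighted_sum_le (polseq (k + 1) s')
        (fun a' => Qseq k s' a' - Qseq (k + 1) s' a') (hpol (k + 1) s').1 (hpol (k + 1) s').2 M
        (hM s')
      refine (sub_le_sub_right h1 _).trans ?_
      rw [← Finset.sum_sub_distrib]
      refine le_of_eq_of_le (Finset.sum_congr rfl fun a' _ => ?_) h2
      ring
    have h3 := mul_le_mul_of_nonneg_left
      (weighted_sum_le (P s a) _ (hP0 s a) (hP1 s a) M hval) hγ0
    simp only [mul_sub, Finset.sum_sub_distrib] at h3
    have e1 := hQ k s a
    have e2 := hQ (k + 1) s a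
    simp only [mul_sub, Finset.sum_sub_distrib] at e1 e2
    linarith
  have hmono : ∀ s a, Monotone fun k => Qseq k s a :=
    fun s a => monotone_nat_of_le_succ fun k => hstep k s a
  refine ⟨hmono, fun C _ hC s a => ⟨_, tendsto_atTop_ciSup (hmono s a)
    ⟨(C + γ * (α * Real.log (Fintype.card A))) / (1 - γ), ?_⟩⟩⟩
  rintro _ ⟨k, rfl⟩
  refine le_div_of_discounted hγ1 (Qseq k) _ (fun M hM s a => ?_) s a
  have h1 := weighted_sum_le (P s a) _ (hP0 s a) (hP1 s a) _ fun s' =>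
    (softValue_le_logSumExp hα (polseq k s') (Qseq k s') (hpol k s').1 (hpol k s').2).trans
      (logSumExp_le hα (Qseq k s') M (hM s'))
  have h2 := mul_le_mul_of_nonneg_left h1 hγ0
  have h3 := (abs_le.1 (hC s a)).2
  rw [hQ k s a]
  linarith
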